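/- Let m ≥ 2 and n ≥ 1, and let U_{m,n} = {1, …, m} ∪ {i, 2i, …, ni} ⊆ ℂ, writing x_j = j for 1 ≤ j ≤ m and y_k = ki for 1 ≤ k ≤ n. Let A be the subposet of NC(U_{m,n}) consisting of all noncrossing partitions in which x_m is either a singleton block or lies in the same block as x_{m−1}; for each k ∈ {1, …, n} let B_k be the subposet consisting of all noncrossing partitions in which x_m shares a block with y_k but with none of x_{m−1}, y_1, …, y_{k−1}. Then: (1) A is order-isomorphic to the direct product of NC(U_{m−1,n}) with a two-element chain; (2) B_k is order-isomorphic to the direct product of NC(U_{m−1,k−1}) with the Boolean lattice of subsets of an (n−k)-element set; and (3) NC(U_{m,n}) is the disjoint union of A, B_1, …, B_n. -/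

import Mathlib

open Finset

/-- A finpartition of a finite set of points in the plane is *noncrossing* if the
convex hulls (over `ℝ`) of its blocks are pairwise disjoint. -/
def IsNoncrossing {P : Finset ℂ} (π : Finpartition P) : Prop :=
  (π.parts : Set (Finset ℂ)).Pairwise fun B₁ B₂ =>
    Disjoint (convexHull ℝ (B₁ : Set ℂ)) (convexHull ℝ (B₂ : Set ℂ))

/-- The poset `NC(P)` of noncrossing partitions of `P`, ordered by refinement:
`π ≤ μ` iff every block of `μ` is a union of blocks of `π`. -/
abbrev NC (P : Finset ℂ) : Type := {π : Finpartition P // IsNoncrossing π}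

/-- The blocks of a noncrossing partition. -/
def NC.parts {P : Finset ℂ} (π : NC P) : Finset (Finset ℂ) := π.1.parts

/-- Two points lie in a common block of a noncrossing partition. -/
def NC.SameBlock {P : Finset ℂ} (π : NC P) (a b : ℂ) : Prop :=
  ∃ B ∈ π.parts, a ∈ B ∧ b ∈ B

/-- The open cone configuration `U_{m,n} = {1, …, m} ∪ {i, 2i, …, ni} ⊆ ℂ`. -/
noncomputable def Uconfig (m n : ℕ) : Finset ℂ :=
  ((Finset.Icc 1 m).image fun j : ℕ => (j : ℂ)) ∪
    ((Finset.Icc 1 n).image fun k : ℕ => (k : ℂ) * Complex.I)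

/-- `x_m` is a singleton block or lies in the same block as `x_{m-1}`. -/
def UcondA (m n : ℕ) (μ : NC (Uconfig m n)) : Prop :=
  ({((m : ℕ) : ℂ)} : Finset ℂ) ∈ μ.parts ∨ μ.SameBlock (((m - 1 : ℕ) : ℂ)) ((m : ℂ))

/-- `x_m` shares a block with `y_k` but with none of `x_{m-1}, y_1, …, y_{k-1}`. -/
def UcondB (m n k : ℕ) (μ : NC (Uconfig m n)) : Prop :=
  ∃ B ∈ μ.parts, (m : ℂ) ∈ B ∧ (k : ℂ) * Complex.I ∈ B ∧
    ((m - 1 : ℕ) : ℂ) ∉ B ∧ ∀ j : ℕ, 1 ≤ j → j < k → (j : ℂ) * Complex.I ∉ B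


/-- Encoding of the points: `x_j` is `j` and `y_k` is `-k`. -/
noncomputable def pt (a : ℤ) : ℂ := ⟨((max a 0 : ℤ) : ℝ), ((max (-a) 0 : ℤ) : ℝ)⟩

lemma pt_inj {a b : ℤ} (h : pt a = pt b) : a = b := by
  have h1 := congrArg Complex.re h
  have h2 := congrArg Complex.im h
  simp only [pt] at h1 h2
  have h1' : max a 0 = max b 0 := by exact_mod_cast h1
  have h2' : max (-a) 0 = max (-b) 0 := by exact_mod_cast h2
  omega

lemma pt_pos (j : ℕ) : pt (j : ℤ) = (j : ℂ) := by
  apply Complex.ext <;> simp [pt]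

lemma pt_neg (j : ℕ) : pt (-(j : ℤ)) = (j : ℂ) * Complex.I := by
  apply Complex.ext <;> simp [pt]

/-- The index set of `U_{m,n}`. -/
def Vset (m n : ℕ) (a : ℤ) : Prop := a ≠ 0 ∧ -(n : ℤ) ≤ a ∧ a ≤ m

lemma mem_Uconfig (m n : ℕ) (z : ℂ) : z ∈ Uconfig m n ↔ ∃ a, Vset m n a ∧ pt a = z := by
  simp only [Uconfig, Finset.mem_union, Finset.mem_image, Finset.mem_Icc, Vset]
  constructor
  · rintro (⟨j, hj, rfl⟩ | ⟨j, hj, rfl⟩)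
    · exact ⟨j, by omega, pt_pos j⟩
    · exact ⟨-j, by omega, pt_neg j⟩
  · rintro ⟨a, ⟨h0, h1, h2⟩, rfl⟩
    rcases lt_or_gt_of_ne h0 with h | h
    · right
      refine ⟨a.natAbs, by omega, ?_⟩
      rw [← pt_neg]; congr 1; omega
    · left
      refine ⟨a.natAbs, by omega, ?_⟩
      rw [← pt_pos]; congr 1; omega

lemma pt_mem {m n : ℕ} {a : ℤ} : pt a ∈ Uconfig m n ↔ Vset m n a := by
  rw [mem_Uconfig]
  constructor
  · rintro ⟨b, hb, h⟩
    rwa [← pt_inj h]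
  · intro h
    exact ⟨a, h, rfl⟩

/-- Combinatorial description of a noncrossing partition of `U_{m,n}`. -/
structure Good (m n : ℕ) (r : Setoid ℤ) : Prop where
  out : ∀ a b, r a b → a ≠ b → Vset m n a
  pos : ∀ a b c, 0 < a → a < b → b < c → r a c → r a b
  neg : ∀ a b c, c < 0 → a < b → b < c → r a c → r a b
  cross : ∀ a b c d, 0 < a → d < 0 → a < c → b < d → r a b → r c d → r a c

lemma disj_of_sep {B C : Set ℂ} (p q t : ℝ) (hB : ∀ z ∈ B, p * z.re + q * z.im < t)
    (hC : ∀ z ∈ C, t < p * z.re + q * z.im) :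
    Disjoint (convexHull ℝ B) (convexHull ℝ C) := by
  have hl : IsLinearMap ℝ (fun z : ℂ => p * z.re + q * z.im) := by
    constructor
    · intro x y; simp; ring
    · intro c x; simp; ring
  have h1 : convexHull ℝ B ⊆ {z | p * z.re + q * z.im < t} :=
    convexHull_min hB (convex_halfSpace_lt hl t)
  have h2 : convexHull ℝ C ⊆ {z | t < p * z.re + q * z.im} :=
    convexHull_min hC (convex_halfSpace_gt hl t)
  rw [Set.disjoint_left]
  intro z hz hz'
  have := h1 hz
  have := h2 hz'
  simp only [Set.mem_ofPred_eq] at *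
  linarith

lemma exists_thr (M : ℤ) (S R : ℤ → Prop) (hS : ∀ s, S s → s ≤ M)
    (hT : ∀ t, R t → 0 < t) (hST : ∀ s t, S s → R t → s < t) :
    ∃ α : ℝ, 0 < α ∧ (∀ s, S s → (s : ℝ) < α) ∧ ∀ t, R t → α < t := by
  obtain ⟨z, hz, hmax⟩ := Int.exists_greatest_of_bdd (P := fun z => S z ∨ z = 0)
    ⟨max M 0, by rintro z (h | h); have := hS z h; omega; omega⟩ ⟨0, Or.inr rfl⟩
  have hz0 : 0 ≤ z := hmax 0 (Or.inr rfl)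
  have hz0' : (0 : ℝ) ≤ z := by exact_mod_cast hz0
  refine ⟨z + 1 / 2, by linarith, ?_, ?_⟩
  · intro s hs
    have : (s : ℝ) ≤ z := by exact_mod_cast hmax s (Or.inl hs)
    linarith
  · intro t ht
    have h : z + 1 ≤ t := by
      rcases hz with hz | hz
      · exact hST z t hz ht
      · have := hT t ht; omega
    have : (z : ℝ) + 1 ≤ t := by exact_mod_cast h
    linarith

lemma disj_of_below (m n : ℕ) {B C : Set ℤ} (hB : ∀ b ∈ B, Vset m n b) (hC : ∀ b ∈ C, Vset m n b)
    (h1 : ∀ b ∈ B, ∀ c ∈ C, 0 < b → 0 < c → b < c)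
    (h2 : ∀ b ∈ B, ∀ c ∈ C, b < 0 → c < 0 → c < b) :
    Disjoint (convexHull ℝ (Set.image pt B)) (convexHull ℝ (Set.image pt C)) := by
  obtain ⟨α, hα, hα1, hα2⟩ := exists_thr m (fun s => 0 < s ∧ s ∈ B) (fun s => 0 < s ∧ s ∈ C)
    (fun s hs => (hB s hs.2).2.2) (fun s hs => hs.1) (fun s t hs ht => h1 s hs.2 t ht.2 hs.1 ht.1)
  obtain ⟨β, hβ, hβ1, hβ2⟩ := exists_thr n (fun s => 0 < s ∧ -s ∈ B) (fun s => 0 < s ∧ -s ∈ C)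
    (fun s hs => by have := (hB _ hs.2).2.1; omega) (fun s hs => hs.1)
    (fun s t hs ht => by have := h2 _ hs.2 _ ht.2 (by omega) (by omega); omega)
  apply disj_of_sep β α (α * β)
  · rintro _ ⟨b, hb, rfl⟩
    rcases lt_or_gt_of_ne (hB b hb).1 with h | h
    · have h3 := hβ1 (-b) ⟨by omega, by simpa using hb⟩
      have e1 : max b 0 = 0 := by omega
      have e2 : max (-b) 0 = -b := by omega
      simp only [pt, e1, e2]
      push_cast at h3 ⊢
      nlinarith
    · have h3 := hα1 b ⟨by omega, hb⟩
      have e1 : max b 0 = b := by omega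
      have e2 : max (-b) 0 = 0 := by omega
      simp only [pt, e1, e2]
      push_cast
      nlinarith
  · rintro _ ⟨b, hb, rfl⟩
    rcases lt_or_gt_of_ne (hC b hb).1 with h | h
    · have h3 := hβ2 (-b) ⟨by omega, by simpa using hb⟩
      have e1 : max b 0 = 0 := by omega
      have e2 : max (-b) 0 = -b := by omega
      simp only [pt, e1, e2]
      push_cast at h3 ⊢
      nlinarith
    · have h3 := hα2 b ⟨by omega, hb⟩
      have e1 : max b 0 = b := by omega
      have e2 : max (-b) 0 = 0 := by omega
      simp only [pt, e1, e2]
      push_cast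
      nlinarith

/-- Two distinct classes of a good relation have disjoint hulls. -/
lemma disj_of_good {m n : ℕ} {r : Setoid ℤ} (hr : Good m n r) {B C : Set ℤ}
    (hB : ∀ b ∈ B, Vset m n b) (hC : ∀ b ∈ C, Vset m n b)
    (hBB : ∀ a ∈ B, ∀ b ∈ B, r a b) (hCC : ∀ a ∈ C, ∀ b ∈ C, r a b)
    (hBC : ∀ a ∈ B, ∀ b ∈ C, ¬ r a b) :
    Disjoint (convexHull ℝ (Set.image pt B)) (convexHull ℝ (Set.image pt C)) := by
  have sym : ∀ {a b}, r a b → r b a := fun h => r.symm' h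
  have tr : ∀ {a b c}, r a b → r b c → r a c := fun h h' => r.trans' h h'
  have hne : ∀ a ∈ B, ∀ b ∈ C, a ≠ b := fun a ha b hb h => hBC a ha b hb (h ▸ r.refl' a)
  have key : ∀ D E : Set ℤ, (∀ a ∈ D, ∀ b ∈ D, r a b) → (∀ a ∈ D, ∀ b ∈ E, ¬ r a b) →
      ∀ a ∈ D, ∀ b ∈ E, ∀ c ∈ D, a < b → b < c → 0 < a ∨ c < 0 → False := by
    intro D E hD hDE a ha b hb c hc h1 h2 h3
    rcases h3 with h3 | h3
    · exact hDE a ha b hb (hr.pos a b c h3 h1 h2 (hD a ha c hc))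
    · exact hDE a ha b hb (hr.neg a b c h3 h1 h2 (hD a ha c hc))
  have kB := key B C hBB hBC
  have kC := key C B hCC (fun a ha b hb h => hBC b hb a ha (sym h))
  have hp : (∀ b ∈ B, ∀ c ∈ C, 0 < b → 0 < c → b < c) ∨
      (∀ b ∈ B, ∀ c ∈ C, 0 < b → 0 < c → c < b) := by
    by_contra! hcon
    obtain ⟨⟨b, hb, c, hc, h1, h2, h3⟩, ⟨b', hb', c', hc', h1', h2', h3'⟩⟩ := hcon
    have n1 := hne b hb c hc
    have n2 := hne b' hb' c' hc'
    have n3 := hne b' hb' c hc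
    by_cases h : b' < c
    · exact kB b' hb' c hc b hb h (by omega) (by omega)
    · exact kC c hc b' hb' c' hc' (by omega) (by omega) (by omega)
  have hq : (∀ b ∈ B, ∀ c ∈ C, b < 0 → c < 0 → c < b) ∨
      (∀ b ∈ B, ∀ c ∈ C, b < 0 → c < 0 → b < c) := by
    by_contra! hcon
    obtain ⟨⟨b, hb, c, hc, h1, h2, h3⟩, ⟨b', hb', c', hc', h1', h2', h3'⟩⟩ := hcon
    have n1 := hne b hb c hc
    have n2 := hne b' hb' c' hc'
    have n3 := hne b' hb' c hc
    by_cases h : c < b'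
    · exact kB b hb c hc b' hb' (by omega) (by omega) (by omega)
    · exact kC c' hc' b' hb' c hc (by omega) (by omega) (by omega)
  have fin1 : (∀ b ∈ B, ∀ c ∈ C, 0 < b → 0 < c → b < c) →
      (∀ b ∈ B, ∀ c ∈ C, b < 0 → c < 0 → c < b) →
      Disjoint (convexHull ℝ (Set.image pt B)) (convexHull ℝ (Set.image pt C)) :=
    fun h1 h2 => disj_of_below m n hB hC h1 h2
  have fin2 : (∀ b ∈ B, ∀ c ∈ C, 0 < b → 0 < c → c < b) →
      (∀ b ∈ B, ∀ c ∈ C, b < 0 → c < 0 → b < c) →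
      Disjoint (convexHull ℝ (Set.image pt B)) (convexHull ℝ (Set.image pt C)) :=
    fun h1 h2 => (disj_of_below m n hC hB (fun b hb c hc h h' => h1 c hc b hb h' h)
      (fun b hb c hc h h' => h2 c hc b hb h' h)).symm
  by_cases hx : ∃ b ∈ B, ∃ c ∈ C, 0 < b ∧ 0 < c
  · by_cases hy : ∃ b ∈ B, ∃ c ∈ C, b < 0 ∧ c < 0
    · obtain ⟨a, ha, c, hc, h1, h2⟩ := hx
      obtain ⟨b, hb, d, hd, h3, h4⟩ := hy
      rcases hp with hp | hp <;> rcases hq with hq | hq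
      · exact fin1 hp hq
      · exact (hBC a ha c hc (hr.cross a b c d h1 h4 (hp a ha c hc h1 h2) (hq b hb d hd h3 h4)
          (hBB a ha b hb) (hCC c hc d hd))).elim
      · exact (hBC a ha c hc (sym (hr.cross c d a b h2 h3 (hp a ha c hc h1 h2)
          (hq b hb d hd h3 h4) (hCC c hc d hd) (hBB a ha b hb)))).elim
      · exact fin2 hp hq
    · push Not at hy
      rcases hp with hp | hp
      · exact fin1 hp (fun b hb c hc h h' => absurd h' (not_lt.2 (hy b hb c hc h)))
      · exact fin2 hp (fun b hb c hc h h' => absurd h' (not_lt.2 (hy b hb c hc h)))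
  · push Not at hx
    rcases hq with hq | hq
    · exact fin1 (fun b hb c hc h h' => absurd h' (not_lt.2 (hx b hb c hc h))) hq
    · exact fin2 (fun b hb c hc h h' => absurd h' (not_lt.2 (hx b hb c hc h))) hq

/-- The relation on indices attached to a partition. -/
def toRel {m n : ℕ} (μ : NC (Uconfig m n)) : Setoid ℤ where
  r a b := a = b ∨ μ.SameBlock (pt a) (pt b)
  iseqv := by
    refine ⟨fun a => Or.inl rfl, ?_, ?_⟩
    · rintro a b (h | ⟨B, h1, h2, h3⟩)
      · exact Or.inl h.symm
      · exact Or.inr ⟨B, h1, h3, h2⟩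
    · rintro a b c (rfl | ⟨B, h1, h2, h3⟩) h
      · exact h
      · rcases h with rfl | ⟨C, h4, h5, h6⟩
        · exact Or.inr ⟨B, h1, h2, h3⟩
        · have := μ.1.eq_of_mem_parts h1 h4 h3 h5
          subst this
          exact Or.inr ⟨B, h1, h2, h6⟩

lemma toRel_iff {m n : ℕ} (μ : NC (Uconfig m n)) (a b : ℤ) :
    toRel μ a b ↔ a = b ∨ μ.SameBlock (pt a) (pt b) := Iff.rfl

lemma toRel_iff_of_mem {m n : ℕ} (μ : NC (Uconfig m n)) {a b : ℤ} (ha : Vset m n a) :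
    toRel μ a b ↔ μ.SameBlock (pt a) (pt b) := by
  rw [toRel_iff]
  constructor
  · rintro (rfl | h)
    · obtain ⟨B, h1, h2⟩ := μ.1.exists_mem (pt_mem.2 ha)
      exact ⟨B, h1, h2, h2⟩
    · exact h
  · exact Or.inr

lemma SameBlock.memV {m n : ℕ} {μ : NC (Uconfig m n)} {a b : ℤ}
    (h : μ.SameBlock (pt a) (pt b)) : Vset m n a ∧ Vset m n b := by
  obtain ⟨B, h1, h2, h3⟩ := h
  exact ⟨pt_mem.1 (μ.1.subset h1 h2), pt_mem.1 (μ.1.subset h1 h3)⟩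

/-- If a point lies on two segments spanned by blocks, then the blocks agree. -/
lemma meet {m n : ℕ} (μ : NC (Uconfig m n)) {a b c d : ℂ} (h1 : μ.SameBlock a b)
    (h2 : μ.SameBlock c d) (z : ℂ) (hz : z ∈ segment ℝ a b) (hz' : z ∈ segment ℝ c d) :
    μ.SameBlock a c := by
  obtain ⟨B, hB, ha, hb⟩ := h1
  obtain ⟨C, hC, hc, hd⟩ := h2
  by_cases h : B = C
  · subst h
    exact ⟨B, hB, ha, hc⟩
  · exfalso
    have := μ.2 hB hC h
    exact Set.disjoint_left.1 this (segment_subset_convexHull ha hb hz)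
      (segment_subset_convexHull hc hd hz')

lemma pt_of_pos {a : ℤ} (h : 0 < a) : pt a = ⟨a, 0⟩ := by
  have e1 : max a 0 = a := by omega
  have e2 : max (-a) 0 = 0 := by omega
  simp [pt, e1, e2]

lemma pt_of_neg {a : ℤ} (h : a < 0) : pt a = ⟨0, -a⟩ := by
  have e1 : max a 0 = 0 := by omega
  have e2 : max (-a) 0 = -a := by omega
  simp [pt, e1, e2]

lemma mem_seg {a b z : ℂ} (p q : ℝ) (hp : 0 ≤ p) (hq : 0 ≤ q) (h : p + q = 1)
    (h1 : p * a.re + q * b.re = z.re) (h2 : p * a.im + q * b.im = z.im) : z ∈ segment ℝ a b := by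
  refine ⟨p, q, hp, hq, h, ?_⟩
  apply Complex.ext
  · rw [Complex.add_re, Complex.smul_re, Complex.smul_re]; exact h1
  · rw [Complex.add_im, Complex.smul_im, Complex.smul_im]; exact h2

lemma toRel_good {m n : ℕ} (μ : NC (Uconfig m n)) : Good m n (toRel μ) := by
  refine ⟨?_, ?_, ?_, ?_⟩
  · rintro a b (h | h) hne
    · exact absurd h hne
    · exact (SameBlock.memV h).1
  · rintro a b c h0 hab hbc (h | h)
    · omega
    · obtain ⟨hVa, hVc⟩ := SameBlock.memV h
      have hVb : Vset m n b := by unfold Vset at *; omega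
      rw [toRel_iff_of_mem μ hVa]
      refine meet μ h ((toRel_iff_of_mem μ hVb).1 (Setoid.refl' _ b)) (pt b) ?_
        (left_mem_segment _ _ _)
      rw [pt_of_pos h0, pt_of_pos (by omega : 0 < b), pt_of_pos (by omega : 0 < c)]
      have e1 : (a : ℝ) < b := by exact_mod_cast hab
      have e2 : (b : ℝ) < c := by exact_mod_cast hbc
      have e3 : (c : ℝ) - a ≠ 0 := by linarith
      exact mem_seg ((c - b) / (c - a)) ((b - a) / (c - a))
        (div_nonneg (by linarith) (by linarith)) (div_nonneg (by linarith) (by linarith)) (by field_simp; ring) (by dsimp only; field_simp; ring) (by simp)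
  · rintro a b c h0 hab hbc (h | h)
    · omega
    · obtain ⟨hVa, hVc⟩ := SameBlock.memV h
      have hVb : Vset m n b := by unfold Vset at *; omega
      rw [toRel_iff_of_mem μ hVa]
      refine meet μ h ((toRel_iff_of_mem μ hVb).1 (Setoid.refl' _ b)) (pt b) ?_
        (left_mem_segment _ _ _)
      rw [pt_of_neg h0, pt_of_neg (by omega : b < 0), pt_of_neg (by omega : a < 0)]
      have e1 : (a : ℝ) < b := by exact_mod_cast hab
      have e2 : (b : ℝ) < c := by exact_mod_cast hbc
      have e3 : (c : ℝ) - a ≠ 0 := by linarith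
      exact mem_seg ((c - b) / (c - a)) ((b - a) / (c - a))
        (div_nonneg (by linarith) (by linarith)) (div_nonneg (by linarith) (by linarith)) (by field_simp; ring) (by simp) (by dsimp only; field_simp; ring)
  · rintro a b c d h0 hd hac hbd (h | h) (h' | h')
    · omega
    · omega
    · omega
    · rw [toRel_iff_of_mem μ (SameBlock.memV h).1]
      have e1 : (a : ℝ) < c := by exact_mod_cast hac
      have e2 : (b : ℝ) < d := by exact_mod_cast hbd
      have e3 : (0 : ℝ) < a := by exact_mod_cast h0
      have e4 : (d : ℝ) < 0 := by exact_mod_cast hd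
      have hD : (0 : ℝ) < a * d - b * c := by nlinarith
      refine meet μ h h' ⟨a * c * (d - b) / (a * d - b * c), -(b * d * (a - c) / (a * d - b * c))⟩ ?_ ?_
      · rw [pt_of_pos h0, pt_of_neg (by omega : b < 0)]
        refine mem_seg (c * (d - b) / (a * d - b * c)) (d * (a - c) / (a * d - b * c))
          (div_nonneg (by nlinarith) hD.le) (div_nonneg (by nlinarith) hD.le) ?_ ?_ ?_
        · rw [← add_div, div_eq_one_iff_eq hD.ne']; ring
        · ring
        · ring
      · rw [pt_of_pos (by omega : 0 < c), pt_of_neg hd]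
        refine mem_seg (a * (d - b) / (a * d - b * c)) (b * (a - c) / (a * d - b * c))
          (div_nonneg (by nlinarith) hD.le) (div_nonneg (by nlinarith) hD.le) ?_ ?_ ?_
        · rw [← add_div, div_eq_one_iff_eq hD.ne']; ring
        · ring
        · ring

lemma toRel_le_iff {m n : ℕ} (μ ν : NC (Uconfig m n)) : toRel μ ≤ toRel ν ↔ μ ≤ ν := by
  constructor
  · intro h B hB
    obtain ⟨z, hz⟩ := μ.1.nonempty_of_mem_parts hB
    obtain ⟨a, ha, rfl⟩ := (mem_Uconfig m n z).1 (μ.1.subset hB hz)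
    obtain ⟨C, hC, haC⟩ := ν.1.exists_mem (pt_mem.2 ha)
    refine ⟨C, hC, ?_⟩
    intro w hw
    obtain ⟨b, hb, rfl⟩ := (mem_Uconfig m n w).1 (μ.1.subset hB hw)
    have h1 : toRel μ a b := Or.inr ⟨B, hB, hz, hw⟩
    obtain ⟨D, hD, h2, h3⟩ := (toRel_iff_of_mem ν ha).1 (h h1)
    rwa [ν.1.eq_of_mem_parts hC hD haC h2]
  · rintro h a b (hab | ⟨B, hB, h1, h2⟩)
    · exact Or.inl hab
    · obtain ⟨C, hC, hBC⟩ := h hB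
      exact Or.inr ⟨C, hC, hBC h1, hBC h2⟩

lemma toRel_surj {m n : ℕ} (r : Setoid ℤ) (hr : Good m n r) :
    ∃ μ : NC (Uconfig m n), toRel μ = r := by
  classical
  have hg : Function.LeftInverse (Function.invFun pt) pt :=
    Function.leftInverse_invFun (fun a b h => pt_inj h)
  let s : Setoid ℂ := r.comap (Function.invFun pt)
  have hs : ∀ a b, s (pt a) (pt b) ↔ r a b := by
    intro a b
    rw [Setoid.comap_rel, hg, hg]
  let π := Finpartition.ofSetSetoid s (Uconfig m n)
  have hπ : ∀ a b, (∃ B ∈ π.parts, pt a ∈ B ∧ pt b ∈ B) ↔ Vset m n a ∧ Vset m n b ∧ r a b := by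
    intro a b
    rw [← Finpartition.mem_part_iff_exists, Finpartition.mem_part_ofSetSetoid_iff_rel, pt_mem,
      pt_mem, hs]
    constructor
    · rintro ⟨h1, h2, h3⟩; exact ⟨h2, h1, r.symm' h3⟩
    · rintro ⟨h1, h2, h3⟩; exact ⟨h2, h1, r.symm' h3⟩
  have himg : ∀ B ∈ π.parts, (B : Set ℂ) = Set.image pt {a | pt a ∈ B} := by
    intro B hB
    ext z
    constructor
    · intro hz
      obtain ⟨a, ha, rfl⟩ := (mem_Uconfig m n z).1 (π.subset hB hz)
      exact ⟨a, hz, rfl⟩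
    · rintro ⟨a, ha, rfl⟩
      exact ha
  have hnc : IsNoncrossing π := by
    intro B hB C hC hBC
    rw [himg B hB, himg C hC]
    refine disj_of_good hr ?_ ?_ ?_ ?_ ?_
    · intro b hb; exact pt_mem.1 (π.subset hB hb)
    · intro b hb; exact pt_mem.1 (π.subset hC hb)
    · intro a ha b hb; exact ((hπ a b).1 ⟨B, hB, ha, hb⟩).2.2
    · intro a ha b hb; exact ((hπ a b).1 ⟨C, hC, ha, hb⟩).2.2
    · intro a ha b hb hab
      obtain ⟨D, hD, h1, h2⟩ := (hπ a b).2
        ⟨pt_mem.1 (π.subset hB ha), pt_mem.1 (π.subset hC hb), hab⟩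
      exact hBC ((π.eq_of_mem_parts hB hD ha h1).trans (π.eq_of_mem_parts hD hC h2 hb))
  refine ⟨⟨π, hnc⟩, ?_⟩
  ext a b
  rw [toRel_iff]
  change (a = b ∨ ∃ B ∈ π.parts, pt a ∈ B ∧ pt b ∈ B) ↔ _
  rw [hπ]
  constructor
  · rintro (rfl | h)
    · exact r.refl' a
    · exact h.2.2
  · intro h
    by_cases hab : a = b
    · exact Or.inl hab
    · exact Or.inr ⟨hr.out a b h hab, hr.out b a (r.symm' h) (Ne.symm hab), h⟩

lemma condA_iff (M n : ℕ) (hM : 1 ≤ M) (μ : NC (Uconfig (M + 1) n)) :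
    UcondA (M + 1) n μ ↔
      (∀ b : ℤ, toRel μ ((M : ℤ) + 1) b → b = (M : ℤ) + 1) ∨ toRel μ M ((M : ℤ) + 1) := by
  have e1 : (((M + 1 : ℕ) : ℕ) : ℂ) = pt ((M : ℤ) + 1) := by rw [← pt_pos]; push_cast; rfl
  have e2 : (((M + 1 - 1 : ℕ) : ℕ) : ℂ) = pt (M : ℤ) := by rw [← pt_pos]; simp
  have hV : Vset (M + 1) n ((M : ℤ) + 1) := by unfold Vset; push_cast; omega
  have hV' : Vset (M + 1) n (M : ℤ) := by unfold Vset; push_cast; omega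
  rw [UcondA, e1, e2, ← toRel_iff_of_mem μ hV']
  refine or_congr ?_ Iff.rfl
  constructor
  · intro h b hb
    obtain ⟨B, hB, h1, h2⟩ := (toRel_iff_of_mem μ hV).1 hb
    have := μ.1.eq_of_mem_parts hB h h1 (Finset.mem_singleton_self _)
    rw [this, Finset.mem_singleton] at h2
    exact pt_inj h2
  · intro h
    obtain ⟨B, hB, h1⟩ := μ.1.exists_mem (pt_mem.2 hV)
    have : B = {pt ((M : ℤ) + 1)} := by
      ext z
      rw [Finset.mem_singleton]
      constructor
      · intro hz
        obtain ⟨a, ha, rfl⟩ := (mem_Uconfig _ n z).1 (μ.1.subset hB hz)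
        rw [h a (Or.inr ⟨B, hB, h1, hz⟩)]
      · rintro rfl; exact h1
    rw [← this]
    exact hB

lemma condB_iff (M n k : ℕ) (μ : NC (Uconfig (M + 1) n)) :
    UcondB (M + 1) n k μ ↔
      toRel μ ((M : ℤ) + 1) (-(k : ℤ)) ∧ ¬ toRel μ ((M : ℤ) + 1) M ∧
        ∀ j : ℕ, 1 ≤ j → j < k → ¬ toRel μ ((M : ℤ) + 1) (-(j : ℤ)) := by
  have e1 : (((M + 1 : ℕ) : ℕ) : ℂ) = pt ((M : ℤ) + 1) := by rw [← pt_pos]; push_cast; rfl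
  have e2 : (((M + 1 - 1 : ℕ) : ℕ) : ℂ) = pt (M : ℤ) := by rw [← pt_pos]; simp
  have hV : Vset (M + 1) n ((M : ℤ) + 1) := by unfold Vset; push_cast; omega
  simp only [UcondB, e1, e2, ← pt_neg, toRel_iff_of_mem μ hV]
  constructor
  · rintro ⟨B, hB, h1, h2, h3, h4⟩
    have key : ∀ z, μ.SameBlock (pt ((M : ℤ) + 1)) z → z ∈ B := by
      rintro z ⟨C, hC, h5, h6⟩
      rwa [μ.1.eq_of_mem_parts hB hC h1 h5]
    exact ⟨⟨B, hB, h1, h2⟩, fun h => h3 (key _ h), fun j hj hj' h => h4 j hj hj' (key _ h)⟩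
  · rintro ⟨⟨B, hB, h1, h2⟩, h3, h4⟩
    exact ⟨B, hB, h1, h2, fun h => h3 ⟨B, hB, h1, h⟩, fun j hj hj' h => h4 j hj hj' ⟨B, hB, h1, h⟩⟩

lemma mkIso {m n : ℕ} {γ : Type*} [PartialOrder γ] (p : NC (Uconfig m n) → Prop) (g : γ → Setoid ℤ)
    (hg : ∀ x, Good m n (g x)) (hle : ∀ x y, g x ≤ g y ↔ x ≤ y)
    (hp : ∀ x μ, toRel μ = g x → p μ) (hs : ∀ μ, p μ → ∃ x, g x = toRel μ) :
    Nonempty ({μ : NC (Uconfig m n) // p μ} ≃o γ) := by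
  choose f hf using fun μ : {μ : NC (Uconfig m n) // p μ} => hs μ.1 μ.2
  have h1 : ∀ μ ν, f μ ≤ f ν ↔ μ ≤ ν := by
    intro μ ν
    rw [← hle, hf, hf, toRel_le_iff]
    rfl
  choose h hh using fun x => toRel_surj (g x) (hg x)
  have inj : ∀ μ ν : NC (Uconfig m n), toRel μ = toRel ν → μ = ν := fun μ ν h =>
    le_antisymm ((toRel_le_iff _ _).1 h.le) ((toRel_le_iff _ _).1 h.ge)
  have e : γ ≃o {μ : NC (Uconfig m n) // p μ} :=
    { toFun := fun x => ⟨h x, hp x _ (hh x)⟩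
      invFun := f
      left_inv := by
        intro x
        have e1 : g (f ⟨h x, hp x _ (hh x)⟩) = g x := by rw [hf, hh]
        exact le_antisymm ((hle _ _).1 e1.le) ((hle _ _).1 e1.ge)
      right_inv := by
        intro μ
        apply Subtype.ext
        apply inj
        rw [hh, hf]
      map_rel_iff' := by
        intro x y
        rw [← hle, ← hh, ← hh, toRel_le_iff]
        rfl }
  exact ⟨e.symm⟩

/-- Restriction of a relation to the index set of a smaller configuration. -/
def res (m n : ℕ) (r : Setoid ℤ) : Setoid ℤ where
  r a b := a = b ∨ (Vset m n a ∧ Vset m n b ∧ r a b)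
  iseqv := by
    refine ⟨fun a => Or.inl rfl, ?_, ?_⟩
    · rintro a b (h | ⟨h1, h2, h3⟩)
      · exact Or.inl h.symm
      · exact Or.inr ⟨h2, h1, r.symm' h3⟩
    · rintro a b c (rfl | ⟨h1, h2, h3⟩) h
      · exact h
      · rcases h with rfl | ⟨h4, h5, h6⟩
        · exact Or.inr ⟨h1, h2, h3⟩
        · exact Or.inr ⟨h1, h5, r.trans' h3 h6⟩

lemma res_iff (m n : ℕ) (r : Setoid ℤ) (a b : ℤ) :
    res m n r a b ↔ a = b ∨ (Vset m n a ∧ Vset m n b ∧ r a b) := Iff.rfl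

lemma res_good {m n m' n' : ℕ} {r : Setoid ℤ} (hr : Good m' n' r) : Good m n (res m n r) := by
  refine ⟨?_, ?_, ?_, ?_⟩
  · rintro a b (h | h) hne
    · exact absurd h hne
    · exact h.1
  · rintro a b c h0 h1 h2 (h | ⟨h3, h4, h5⟩)
    · omega
    · exact Or.inr ⟨h3, by unfold Vset at *; omega, hr.pos a b c h0 h1 h2 h5⟩
  · rintro a b c h0 h1 h2 (h | ⟨h3, h4, h5⟩)
    · omega
    · exact Or.inr ⟨h3, by unfold Vset at *; omega, hr.neg a b c h0 h1 h2 h5⟩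
  · rintro a b c d h0 h1 h2 h3 (h | ⟨h4, h5, h6⟩) (h' | ⟨h4', h5', h6'⟩)
    · omega
    · omega
    · omega
    · exact Or.inr ⟨h4, h4', hr.cross a b c d h0 h1 h2 h3 h6 h6'⟩

lemma Good.mono {m n m' n' : ℕ} {r : Setoid ℤ} (hr : Good m n r) (hm : m ≤ m') (hn : n ≤ n') :
    Good m' n' r :=
  ⟨fun a b h hne => by have := hr.out a b h hne; unfold Vset at *; omega, hr.pos, hr.neg, hr.cross⟩

lemma Good.out2 {m n : ℕ} {r : Setoid ℤ} (hr : Good m n r) {a b : ℤ} (h : r a b) (hne : a ≠ b) :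
    Vset m n a ∧ Vset m n b := ⟨hr.out a b h hne, hr.out b a (r.symm' h) hne.symm⟩

/-- Collapse `M + 1` to `c`. -/
def coll (M : ℕ) (c : ℤ) (a : ℤ) : ℤ := if a = (M : ℤ) + 1 then c else a

lemma coll_top (M : ℕ) (c : ℤ) : coll M c ((M : ℤ) + 1) = c := if_pos rfl

lemma coll_ne (M : ℕ) (c : ℤ) {a : ℤ} (h : a ≠ (M : ℤ) + 1) : coll M c a = a := if_neg h

lemma comap_good {M n : ℕ} (hM : 1 ≤ M) {r : Setoid ℤ} (hr : Good M n r) :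
    Good (M + 1) n (r.comap (coll M M)) := by
  refine ⟨?_, ?_, ?_, ?_⟩
  · intro a b h hne
    rw [Setoid.comap_rel] at h
    by_cases ha : a = (M : ℤ) + 1
    · unfold Vset; push_cast; omega
    · rw [coll_ne _ _ ha] at h
      by_cases hb : b = (M : ℤ) + 1
      · rw [hb, coll_top] at h
        by_cases hc : a = M
        · unfold Vset; push_cast; omega
        · have := hr.out _ _ h hc
          unfold Vset at *; push_cast; omega
      · rw [coll_ne _ _ hb] at h
        have := hr.out _ _ h hne
        unfold Vset at *; push_cast; omega
  · intro a b c h0 h1 h2 h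
    rw [Setoid.comap_rel] at *
    by_cases ha : a = (M : ℤ) + 1
    · have hc : c ≠ (M : ℤ) + 1 := by omega
      rw [ha, coll_top, coll_ne _ _ hc] at h
      have := (hr.out2 h (by omega)).2
      unfold Vset at this; omega
    · rw [coll_ne _ _ ha] at *
      by_cases hc : c = (M : ℤ) + 1
      · have hb : b ≠ (M : ℤ) + 1 := by omega
        rw [hc, coll_top] at h
        rw [coll_ne _ _ hb]
        by_cases hb : b = M
        · rwa [hb]
        · exact hr.pos a b M h0 h1 (by omega) h
      · rw [coll_ne _ _ hc] at h
        have := (hr.out2 h (by omega)).2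
        unfold Vset at this
        rw [coll_ne _ _ (by omega)]
        exact hr.pos a b c h0 h1 h2 h
  · intro a b c h0 h1 h2 h
    rw [Setoid.comap_rel] at *
    rw [coll_ne _ _ (by omega), coll_ne _ _ (by omega)] at *
    exact hr.neg a b c h0 h1 h2 h
  · intro a b c d h0 h1 h2 h3 h h'
    rw [Setoid.comap_rel] at *
    rw [coll_ne _ _ (by omega : b ≠ (M : ℤ) + 1)] at h
    rw [coll_ne _ _ (by omega : d ≠ (M : ℤ) + 1)] at h'
    by_cases hc : c = (M : ℤ) + 1
    · subst hc
      rw [coll_top] at *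
      have ha' : a ≠ (M : ℤ) + 1 := by omega
      rw [coll_ne _ _ ha'] at *
      by_cases ha : a = M
      · rw [ha]
      · exact hr.cross a b M d h0 h1 (by omega) h3 h h'
    · rw [coll_ne _ _ hc] at *
      have := hr.out _ _ h' (by omega)
      unfold Vset at this
      rw [coll_ne _ _ (by omega)] at *
      have hfin := hr.cross a b c d h0 h1 h2 h3 h h'
      exact hfin

/-- The relation attached to a pair in case `A`. -/
def gA (M : ℕ) (r : Setoid ℤ) (ε : Fin 2) : Setoid ℤ :=
  if ε = 0 then r else r.comap (coll M M)

lemma le_comap_iff {M n : ℕ} {r r' : Setoid ℤ} (hr : Good M n r) :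
    r ≤ r'.comap (coll M M) ↔ r ≤ r' := by
  have key : ∀ a b, r a b → a ≠ b → (r' (coll M M a) (coll M M b) ↔ r' a b) := by
    intro a b h hne
    obtain ⟨h1, h2⟩ := hr.out2 h hne
    unfold Vset at h1 h2
    rw [coll_ne _ _ (by omega), coll_ne _ _ (by omega)]
  constructor
  · intro h a b hab
    by_cases hne : a = b
    · rw [hne]
    · exact (key a b hab hne).1 (h hab)
  · intro h a b hab
    by_cases hne : a = b
    · rw [hne]
    · exact (key a b hab hne).2 (h hab)

lemma caseA (M n : ℕ) (hM : 1 ≤ M) :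
    Nonempty ({μ : NC (Uconfig (M + 1) n) // UcondA (M + 1) n μ} ≃o NC (Uconfig M n) × Fin 2) := by
  apply mkIso _ (fun x : NC (Uconfig M n) × Fin 2 => gA M (toRel x.1) x.2)
  · rintro ⟨ρ, ε⟩
    have hr := toRel_good ρ
    by_cases h : ε = 0
    · simp only [gA, h, if_true]
      exact hr.mono (by omega) le_rfl
    · simp only [gA, h, if_false]
      exact comap_good hM hr
  · rintro ⟨ρ, ε⟩ ⟨ρ', ε'⟩
    have hr := toRel_good ρ
    have hr' := toRel_good ρ'
    rw [Prod.mk_le_mk, ← toRel_le_iff]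
    have h01 : ∀ e : Fin 2, e = 0 ∨ e = 1 := by decide
    rcases h01 ε with rfl | rfl <;> rcases h01 ε' with rfl | rfl
    · simp [gA]
    · simp [gA, le_comap_iff hr]
    · simp only [gA]
      constructor
      · intro h
        exfalso
        have h1 : (toRel ρ').r M ((M : ℤ) + 1) := by
          apply h
          change (toRel ρ) (coll M M M) (coll M M (M + 1))
          rw [coll_top, coll_ne _ _ (by omega)]
        have := (hr'.out2 h1 (by omega)).2
        unfold Vset at this
        omega
      · rintro ⟨-, h⟩
        exact absurd h (by decide)
    · simp only [gA]
      simp only [one_ne_zero, if_false, le_refl, and_true]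
      constructor
      · intro h
        rw [← le_comap_iff (M := M) hr]
        exact le_trans ((le_comap_iff hr).2 le_rfl) h
      · intro h a b hab
        exact h hab
  · rintro ⟨ρ, ε⟩ μ hμ
    have hr := toRel_good ρ
    rw [condA_iff M n hM, hμ]
    change (∀ b : ℤ, gA M (toRel ρ) ε ((M : ℤ) + 1) b → b = (M : ℤ) + 1) ∨
      gA M (toRel ρ) ε M ((M : ℤ) + 1)
    by_cases h : ε = 0
    · left
      intro b hb
      rw [show gA M (toRel ρ) ε = toRel ρ from if_pos h] at hb
      by_contra hne
      have := hr.out _ _ hb (Ne.symm hne)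
      unfold Vset at this
      omega
    · right
      rw [show gA M (toRel ρ) ε = (toRel ρ).comap (coll M M) from if_neg h]
      rw [Setoid.comap_rel, coll_top, coll_ne _ _ (by omega)]
  · intro μ hμ
    rw [condA_iff M n hM] at hμ
    have hs := toRel_good μ
    rcases hμ with h | h
    · have hg : Good M n (toRel μ) := by
        refine ⟨?_, hs.pos, hs.neg, hs.cross⟩
        intro a b hab hne
        have h1 := hs.out a b hab hne
        have h2 : a ≠ (M : ℤ) + 1 := by
          rintro rfl
          exact hne (h b hab).symm
        unfold Vset at *
        omega
      obtain ⟨ρ, hρ⟩ := toRel_surj _ hg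
      exact ⟨(ρ, 0), by simp [gA, hρ]⟩
    · obtain ⟨ρ, hρ⟩ := toRel_surj _ (res_good (m := M) (n := n) hs)
      refine ⟨(ρ, 1), ?_⟩
      simp only [gA, hρ, one_ne_zero, if_false]
      have hc : ∀ a, toRel μ a (coll M M a) := by
        intro a
        by_cases ha : a = (M : ℤ) + 1
        · rw [ha, coll_top]; exact Setoid.symm' _ h
        · rw [coll_ne _ _ ha]
      have hc' : ∀ a b, toRel μ a b ↔ toRel μ (coll M M a) (coll M M b) := fun a b =>
        ⟨fun h => Setoid.trans' _ (Setoid.symm' _ (hc a)) (Setoid.trans' _ h (hc b)),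
         fun h => Setoid.trans' _ (hc a) (Setoid.trans' _ h (Setoid.symm' _ (hc b)))⟩
      have hcne : ∀ a, coll M M a ≠ (M : ℤ) + 1 := by
        intro a
        unfold coll
        split_ifs <;> omega
      ext a b
      rw [hc', Setoid.comap_rel, res_iff]
      constructor
      · rintro (h | h)
        · rw [h]
        · exact h.2.2
      · intro h
        by_cases he : coll M M a = coll M M b
        · exact Or.inl he
        · obtain ⟨h1, h2⟩ := hs.out2 h he
          have := hcne a
          have := hcne b
          exact Or.inr ⟨by unfold Vset at *; omega, by unfold Vset at *; omega, h⟩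

/-- The index set of the part of the configuration cut off by `x_{M+1} y_{K+1}`. -/
def Wset (M K n : ℕ) (a : ℤ) : Prop := a = (M : ℤ) + 1 ∨ (-(n : ℤ) ≤ a ∧ a ≤ -((K : ℤ) + 1))

/-- All gaps between `u` and `v` are joined. -/
def Lin (Q : ℤ → Prop) (u v : ℤ) : Prop :=
  ∀ z, (u ≤ z → z < v → Q z) ∧ (v ≤ z → z < u → Q z)

lemma Lin.refl (Q : ℤ → Prop) (u : ℤ) : Lin Q u u := fun z => ⟨by omega, by omega⟩

lemma Lin.symm {Q : ℤ → Prop} {u v : ℤ} (h : Lin Q u v) : Lin Q v u :=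
  fun z => ⟨(h z).2, (h z).1⟩

lemma Lin.trans {Q : ℤ → Prop} {u v w : ℤ} (h : Lin Q u v) (h' : Lin Q v w) : Lin Q u w := by
  intro z
  have h1 := h z
  have h2 := h' z
  constructor
  · intro h3 h4
    by_cases h5 : z < v
    · exact h1.1 h3 h5
    · exact h2.1 (by omega) h4
  · intro h3 h4
    by_cases h5 : z < v
    · exact h2.2 h3 h5
    · exact h1.2 (by omega) h4

lemma W_not_V {M K n : ℕ} {a : ℤ} (h : Wset M K n a) (h' : Vset M K a) : False := by
  unfold Vset at h'
  unfold Wset at h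
  omega

/-- The relation attached to a pair in case `B_{K+1}`. -/
def gB (M K n : ℕ) (Q : ℤ → Prop) (r : Setoid ℤ) (hr : Good M K r) : Setoid ℤ where
  r a b := r a b ∨ (Wset M K n a ∧ Wset M K n b ∧
    Lin Q (coll M (-((K : ℤ) + 1)) a) (coll M (-((K : ℤ) + 1)) b))
  iseqv := by
    refine ⟨fun a => Or.inl (r.refl' a), ?_, ?_⟩
    · rintro a b (h | ⟨h1, h2, h3⟩)
      · exact Or.inl (r.symm' h)
      · exact Or.inr ⟨h2, h1, h3.symm⟩
    · rintro a b c (h | ⟨h1, h2, h3⟩) (h' | ⟨h1', h2', h3'⟩)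
      · exact Or.inl (r.trans' h h')
      · by_cases hab : a = b
        · subst hab; exact Or.inr ⟨h1', h2', h3'⟩
        · exact (W_not_V h1' (hr.out2 h hab).2).elim
      · by_cases hbc : b = c
        · subst hbc; exact Or.inr ⟨h1, h2, h3⟩
        · exact (W_not_V h2 (hr.out2 h' hbc).1).elim
      · exact Or.inr ⟨h1, h2', h3.trans h3'⟩

lemma gB_iff {M K n : ℕ} {Q : ℤ → Prop} {r : Setoid ℤ} {hr : Good M K r} {a b : ℤ} :
    gB M K n Q r hr a b ↔ r a b ∨ (Wset M K n a ∧ Wset M K n b ∧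
      Lin Q (coll M (-((K : ℤ) + 1)) a) (coll M (-((K : ℤ) + 1)) b)) := Iff.rfl

lemma gB_good {M K n : ℕ} (hK : K < n) (Q : ℤ → Prop) (r : Setoid ℤ) (hr : Good M K r) :
    Good (M + 1) n (gB M K n Q r hr) := by
  refine ⟨?_, ?_, ?_, ?_⟩
  · rintro a b (h | ⟨h1, h2, h3⟩) hne
    · have := hr.out a b h hne
      unfold Vset at *; omega
    · unfold Wset at h1; unfold Vset; omega
  · rintro a b c h0 h1 h2 (h | ⟨h3, h4, h5⟩)
    · exact Or.inl (hr.pos a b c h0 h1 h2 h)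
    · unfold Wset at *; omega
  · rintro a b c h0 h1 h2 (h | ⟨h3, h4, h5⟩)
    · exact Or.inl (hr.neg a b c h0 h1 h2 h)
    · refine Or.inr ⟨h3, by unfold Wset at *; omega, ?_⟩
      rw [coll_ne _ _ (by omega), coll_ne _ _ (by omega)] at *
      exact fun z => ⟨fun h6 h7 => (h5 z).1 h6 (by omega), by omega⟩
  · rintro a b c d h0 h1 h2 h3 (h | ⟨h4, h5, h6⟩) (h' | ⟨h4', h5', h6'⟩)
    · exact Or.inl (hr.cross a b c d h0 h1 h2 h3 h h')
    · have := (hr.out2 h (by omega)).2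
      unfold Wset at *; unfold Vset at *; omega
    · have := (hr.out2 h' (by omega)).1
      unfold Wset at *; unfold Vset at *; omega
    · unfold Wset at *; omega

/-- The set of joined gaps. -/
def gapQ (K : ℕ) {N : ℕ} (S : Finset (Fin N)) (z : ℤ) : Prop :=
  ∃ i ∈ S, z = -((K : ℤ) + 2 + (i : ℕ))

lemma gB_le_iff {M K n N : ℕ} (hn : n = K + 1 + N) (S S' : Finset (Fin N)) (r r' : Setoid ℤ)
    (hr : Good M K r) (hr' : Good M K r') :
    gB M K n (gapQ K S) r hr ≤ gB M K n (gapQ K S') r' hr' ↔ r ≤ r' ∧ S ≤ S' := by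
  constructor
  · intro h
    constructor
    · intro a b hab
      by_cases hne : a = b
      · rw [hne]
      · rcases h (Or.inl hab : gB M K n (gapQ K S) r hr a b) with h1 | ⟨h1, -, -⟩
        · exact h1
        · exact (W_not_V h1 (hr.out a b hab hne)).elim
    · intro i hi
      have hiN := i.2
      set z : ℤ := -((K : ℤ) + 2 + (i : ℕ)) with hz
      have hW1 : Wset M K n z := Or.inr (by omega)
      have hW2 : Wset M K n (z + 1) := Or.inr (by omega)
      have e1 : coll M (-((K : ℤ) + 1)) z = z := coll_ne _ _ (by omega)
      have e2 : coll M (-((K : ℤ) + 1)) (z + 1) = z + 1 := coll_ne _ _ (by omega)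
      have h1 : gB M K n (gapQ K S) r hr z (z + 1) := by
        refine Or.inr ⟨hW1, hW2, ?_⟩
        rw [e1, e2]
        exact fun w => ⟨fun h3 h4 => ⟨i, hi, by omega⟩, by omega⟩
      rcases h h1 with h2 | ⟨-, -, h2⟩
      · exact (W_not_V hW1 (hr'.out _ _ h2 (by omega))).elim
      · rw [e1, e2] at h2
        obtain ⟨j, hj, hj'⟩ := (h2 z).1 le_rfl (by omega)
        have : i = j := Fin.ext (by omega)
        rwa [this]
  · rintro ⟨h1, h2⟩ a b (h | ⟨h3, h4, h5⟩)
    · exact Or.inl (h1 h)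
    · refine Or.inr ⟨h3, h4, fun z => ⟨fun h6 h7 => ?_, fun h6 h7 => ?_⟩⟩
      · obtain ⟨i, hi, hz⟩ := (h5 z).1 h6 h7
        exact ⟨i, h2 hi, hz⟩
      · obtain ⟨i, hi, hz⟩ := (h5 z).2 h6 h7
        exact ⟨i, h2 hi, hz⟩

lemma chain_rel (s : Setoid ℤ) (u : ℤ) (d : ℕ) (h : ∀ z, u ≤ z → z < u + d → s z (z + 1)) :
    s u (u + d) := by
  induction d with
  | zero => simp
  | succ d ih =>
    have h1 := ih (fun z h1 h2 => h z h1 (by push_cast; omega))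
    have h2 := h (u + d) (by omega) (by push_cast; omega)
    have := s.trans' h1 h2
    push_cast
    rwa [← add_assoc]

lemma mixed {M K n : ℕ} (s : Setoid ℤ) (hs : Good (M + 1) n s)
    (h1 : s ((M : ℤ) + 1) (-((K : ℤ) + 1))) (h2 : ¬ s ((M : ℤ) + 1) M)
    (h3 : ∀ j : ℕ, 1 ≤ j → j < K + 1 → ¬ s ((M : ℤ) + 1) (-(j : ℤ)))
    {a b : ℤ} (ha : Wset M K n a) (hb : Vset M K b) (hab : s a b) : False := by
  have key : ¬ s ((M : ℤ) + 1) b := by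
    intro h
    unfold Vset at hb
    by_cases hpos : 0 < b
    · by_cases hbM : b = M
      · exact h2 (hbM ▸ h)
      · have := hs.pos b M (M + 1) hpos (by omega) (by omega) (s.symm' h)
        exact h2 (s.trans' h this)
    · refine h3 b.natAbs (by omega) (by omega) ?_
      have : -(b.natAbs : ℤ) = b := by omega
      rwa [this]
  rcases ha with rfl | ha
  · exact key hab
  · by_cases hu : a = -((K : ℤ) + 1)
    · subst hu
      exact key (s.trans' h1 hab)
    · unfold Vset at hb
      by_cases hpos : 0 < b
      · exact key (s.symm' (hs.cross b a (M + 1) (-((K : ℤ) + 1)) hpos (by omega) (by omega)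
          (by omega) (s.symm' hab) h1))
      · have := hs.neg a (-((K : ℤ) + 1)) b (by omega) (by omega) (by omega) hab
        exact key (s.trans' h1 (s.trans' (s.symm' this) hab))

lemma gB_surj {M K n N : ℕ} (hn : n = K + 1 + N) (s : Setoid ℤ) (hs : Good (M + 1) n s)
    (h1 : s ((M : ℤ) + 1) (-((K : ℤ) + 1))) (h2 : ¬ s ((M : ℤ) + 1) M)
    (h3 : ∀ j : ℕ, 1 ≤ j → j < K + 1 → ¬ s ((M : ℤ) + 1) (-(j : ℤ))) :
    ∃ S : Finset (Fin N), gB M K n (gapQ K S) (res M K s) (res_good hs) = s := by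
  classical
  refine ⟨Finset.univ.filter fun i : Fin N =>
    s (-((K : ℤ) + 2 + (i : ℕ))) (-((K : ℤ) + 2 + (i : ℕ)) + 1), ?_⟩
  have hQ : ∀ z : ℤ, gapQ K (Finset.univ.filter fun i : Fin N =>
      s (-((K : ℤ) + 2 + (i : ℕ))) (-((K : ℤ) + 2 + (i : ℕ)) + 1)) z ↔
      (-(n : ℤ) ≤ z ∧ z ≤ -((K : ℤ) + 2) ∧ s z (z + 1)) := by
    intro z
    constructor
    · rintro ⟨i, hi, rfl⟩
      have := i.2
      exact ⟨by omega, by omega, (Finset.mem_filter.1 hi).2⟩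
    · rintro ⟨h4, h5, h6⟩
      have e : z = -((K : ℤ) + 2 + ((-z - (K + 2)).toNat : ℕ)) := by omega
      refine ⟨⟨(-z - (K + 2)).toNat, by omega⟩, ?_, e⟩
      rw [Finset.mem_filter]
      refine ⟨Finset.mem_univ _, ?_⟩
      dsimp only
      rwa [← e]
  generalize (gapQ K (Finset.univ.filter fun i : Fin N =>
      s (-((K : ℤ) + 2 + (i : ℕ))) (-((K : ℤ) + 2 + (i : ℕ)) + 1))) = Q at hQ
  have hc : ∀ a, s a (coll M (-((K : ℤ) + 1)) a) := by
    intro a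
    by_cases ha : a = (M : ℤ) + 1
    · rw [ha, coll_top]; exact h1
    · rw [coll_ne _ _ ha]
  have hc' : ∀ a b, s a b ↔ s (coll M (-((K : ℤ) + 1)) a) (coll M (-((K : ℤ) + 1)) b) := fun a b =>
    ⟨fun h => Setoid.trans' _ (Setoid.symm' _ (hc a)) (Setoid.trans' _ h (hc b)),
     fun h => Setoid.trans' _ (hc a) (Setoid.trans' _ h (Setoid.symm' _ (hc b)))⟩
  have hcW : ∀ a, Wset M K n a → -(n : ℤ) ≤ coll M (-((K : ℤ) + 1)) a ∧
      coll M (-((K : ℤ) + 1)) a ≤ -((K : ℤ) + 1) := by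
    intro a ha
    unfold Wset at ha
    unfold coll
    split_ifs <;> omega
  have up : ∀ u v : ℤ, u ≤ v → (∀ z, u ≤ z → z < v → Q z) → s u v := by
    intro u v huv h
    have e : v = u + ((v - u).toNat : ℕ) := by omega
    rw [e]
    exact chain_rel s u _ (fun z h4 h5 => ((hQ z).1 (h z h4 (by omega))).2.2)
  have down : ∀ u v : ℤ, -(n : ℤ) ≤ u → v ≤ -((K : ℤ) + 1) → s u v →
      ∀ z, u ≤ z → z < v → Q z := by
    intro u v hu hv huv z hz1 hz2
    rw [hQ]
    refine ⟨by omega, by omega, ?_⟩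
    have e1 : s u z := by
      by_cases h : u = z
      · rw [h]
      · exact hs.neg u z v (by omega) (by omega) (by omega) huv
    have e2 : s u (z + 1) := by
      by_cases h : z + 1 = v
      · rw [h]; exact huv
      · exact hs.neg u (z + 1) v (by omega) (by omega) (by omega) huv
    exact s.trans' (s.symm' e1) e2
  ext a b
  rw [gB_iff, res_iff]
  constructor
  · rintro ((rfl | h) | ⟨h4, h5, h6⟩)
    · exact s.refl' a
    · exact h.2.2
    · rw [hc']
      rcases le_total (coll M (-((K : ℤ) + 1)) a) (coll M (-((K : ℤ) + 1)) b) with h | h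
      · exact up _ _ h (fun z => (h6 z).1)
      · exact s.symm' (up _ _ h (fun z => (h6 z).2))
  · intro h
    by_cases hab : a = b
    · exact Or.inl (Or.inl hab)
    · obtain ⟨hVa, hVb⟩ := hs.out2 h hab
      have dich : ∀ a, Vset (M + 1) n a → Wset M K n a ∨ Vset M K a := by
        intro a ha
        unfold Wset Vset at *
        omega
      rcases dich a hVa with ha | ha <;> rcases dich b hVb with hb | hb
      · right
        refine ⟨ha, hb, ?_⟩
        rw [hc'] at h
        have wa := hcW a ha
        have wb := hcW b hb
        exact fun z => ⟨down _ _ wa.1 wb.2 h z, down _ _ wb.1 wa.2 (s.symm' h) z⟩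
      · exact (mixed s hs h1 h2 h3 ha hb h).elim
      · exact (mixed s hs h1 h2 h3 hb ha (s.symm' h)).elim
      · exact Or.inl (Or.inr ⟨ha, hb, h⟩)

lemma caseB (M K n N : ℕ) (hn : n = K + 1 + N) :
    Nonempty ({μ : NC (Uconfig (M + 1) n) // UcondB (M + 1) n (K + 1) μ} ≃o
      NC (Uconfig M K) × Finset (Fin N)) := by
  apply mkIso _ (fun x : NC (Uconfig M K) × Finset (Fin N) =>
    gB M K n (gapQ K x.2) (toRel x.1) (toRel_good x.1))
  · intro x
    exact gB_good (by omega) _ _ _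
  · rintro ⟨ρ, S⟩ ⟨ρ', S'⟩
    rw [Prod.mk_le_mk, ← toRel_le_iff]
    exact gB_le_iff hn _ _ _ _ _ _
  · rintro ⟨ρ, S⟩ μ hμ
    have hr := toRel_good ρ
    rw [condB_iff, hμ]
    push_cast
    refine ⟨Or.inr ⟨Or.inl rfl, Or.inr (by omega), ?_⟩, ?_, ?_⟩
    · rw [coll_top, coll_ne _ _ (by omega)]
      exact Lin.refl _ _
    · rintro (h | ⟨-, h, -⟩)
      · have := hr.out _ _ h (by omega)
        unfold Vset at this; omega
      · unfold Wset at h; omega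
    · rintro j hj hj' (h | ⟨-, h, -⟩)
      · have := hr.out _ _ h (by omega)
        unfold Vset at this; omega
      · unfold Wset at h; omega
  · intro μ hμ
    rw [condB_iff] at hμ
    push_cast at hμ
    obtain ⟨h1, h2, h3⟩ := hμ
    have hs := toRel_good μ
    obtain ⟨S, hS⟩ := gB_surj hn _ hs h1 h2 h3
    obtain ⟨ρ, hρ⟩ := toRel_surj _ (res_good (m := M) (n := K) hs)
    refine ⟨(ρ, S), ?_⟩
    dsimp only
    rw [← hS]
    congr 1

lemma caseC (M n : ℕ) (hM : 1 ≤ M) (μ : NC (Uconfig (M + 1) n)) : ∃! k : ℕ, k ≤ n ∧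
    ((k = 0 ∧ UcondA (M + 1) n μ) ∨ (1 ≤ k ∧ UcondB (M + 1) n k μ)) := by
  classical
  have hs := toRel_good μ
  simp only [condA_iff M n hM, condB_iff]
  generalize toRel μ = s at hs
  by_cases hA : (∀ b : ℤ, s ((M : ℤ) + 1) b → b = (M : ℤ) + 1) ∨ s M ((M : ℤ) + 1)
  · refine ⟨0, ⟨by omega, Or.inl ⟨rfl, hA⟩⟩, ?_⟩
    rintro k ⟨hk, ⟨rfl, -⟩ | ⟨h1, h2, h3, h4⟩⟩
    · rfl
    · exfalso
      rcases hA with hA | hA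
      · have := hA _ h2; omega
      · exact h3 (s.symm' hA)
  · have hA' := hA
    push Not at hA'
    obtain ⟨⟨b, hb, hne⟩, hM'⟩ := hA'
    have hM2 : ¬ s ((M : ℤ) + 1) M := fun h => hM' (s.symm' h)
    have hV := (hs.out2 hb (Ne.symm hne)).2
    unfold Vset at hV
    have hbneg : b < 0 := by
      by_contra hcon
      by_cases hbM : b = M
      · exact hM2 (hbM ▸ hb)
      · have := hs.pos b M (M + 1) (by omega) (by omega) (by omega) (s.symm' hb)
        exact hM2 (s.trans' hb this)
    have hex : ∃ k : ℕ, 1 ≤ k ∧ s ((M : ℤ) + 1) (-(k : ℤ)) := by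
      refine ⟨b.natAbs, by omega, ?_⟩
      have : -(b.natAbs : ℤ) = b := by omega
      rwa [this]
    have hf := Nat.find_spec hex
    have hmin : ∀ j, 1 ≤ j → j < Nat.find hex → ¬ s ((M : ℤ) + 1) (-(j : ℤ)) :=
      fun j hj hj' h => Nat.find_min hex hj' ⟨hj, h⟩
    refine ⟨Nat.find hex, ⟨?_, Or.inr ⟨hf.1, hf.2, hM2, hmin⟩⟩, ?_⟩
    · have := (hs.out2 hf.2 (by omega)).2
      unfold Vset at this; omega
    · rintro k ⟨hk, ⟨-, h⟩ | ⟨h1, h2, h3, h4⟩⟩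
      · exact absurd h hA
      · apply le_antisymm
        · by_contra hcon
          exact h4 _ hf.1 (by omega) hf.2
        · exact Nat.find_min' hex ⟨h1, h2⟩

/-- For `m ≥ 2`, `n ≥ 1`: the subposet `A` of `NC(U_{m,n})` is isomorphic to
`NC(U_{m-1,n})` times a two-element chain; each subposet `B_k` (for `1 ≤ k ≤ n`) is
isomorphic to `NC(U_{m-1,k-1})` times the Boolean lattice of subsets of an
`(n-k)`-element set; and `NC(U_{m,n})` is the disjoint union of `A, B_1, …, B_n`
(each `μ` satisfies exactly one of the `n+1` conditions, encoded by a unique `k ≤ n`,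
with `k = 0` encoding membership in `A`). -/
theorem nc_U_recursive (m n : ℕ) (hm : 2 ≤ m) (hn : 1 ≤ n) :
    Nonempty ({μ : NC (Uconfig m n) // UcondA m n μ} ≃o NC (Uconfig (m - 1) n) × Fin 2) ∧
    (∀ k : ℕ, 1 ≤ k → k ≤ n →
      Nonempty ({μ : NC (Uconfig m n) // UcondB m n k μ} ≃o
        NC (Uconfig (m - 1) (k - 1)) × Finset (Fin (n - k)))) ∧
    ∀ μ : NC (Uconfig m n), ∃! k : ℕ, k ≤ n ∧
      ((k = 0 ∧ UcondA m n μ) ∨ (1 ≤ k ∧ UcondB m n k μ)) := by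
  obtain ⟨M, rfl⟩ : ∃ M, m = M + 1 := ⟨m - 1, by omega⟩
  refine ⟨caseA M n (by omega), ?_, caseC M n (by omega)⟩
  intro k hk hkn
  obtain ⟨K, rfl⟩ : ∃ K, k = K + 1 := ⟨k - 1, by omega⟩
  exact caseB M K n (n - (K + 1)) (by omega)
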